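/- Fix d, n ≥ 1, set d̄ = (d+2)(d+1)/2, and consider the quadratic ICL setup with the bilinear layer fixed so that the prompt passed to the attention layer is the matrix with i-th column (x̄(x_i), y_i) for i ≤ n and last column (x̄(x_{n+1}), 0). Then for every pair of attention weights P, Q ∈ ℝ^{(d̄+1)×(d̄+1)}, there exists Γ ∈ ℝ^{d̄×d̄} such that the sparse weights P₀ = [[0_{d̄×d̄}, 0], [0, 1]] and Q₀ = [[Γ, 0], [0, 0]] achieve ICL loss at most that of (P, Q): E[(ŷ_{P₀,Q₀} + y_{n+1})²] ≤ E[(ŷ_{P,Q} + y_{n+1})²], where ŷ_{P,Q} is the (d̄+1, n+1) entry of attn_{P,Q} applied to that prompt. In other words, the minimum of the ICL loss over all attention weights is not decreased by restricting to this sparse form. -/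

import Mathlib

open MeasureTheory ProbabilityTheory Matrix

noncomputable section

/-- Product of i.i.d. standard Gaussians on `ℝ^d`. -/
def stdGaussianPi (d : ℕ) : Measure (Fin d → ℝ) :=
  Measure.pi fun _ => gaussianReal 0 1

/-- The mask `M = diag(I_n, 0)`. -/
def attnMask (n : ℕ) : Matrix (Fin (n + 1)) (Fin (n + 1)) ℝ :=
  Matrix.diagonal fun i => if i = Fin.last n then 0 else 1

/-- A linear self-attention layer with weights `P, Q`. -/
def attn (D n : ℕ) (P Q : Matrix (Fin (D + 1)) (Fin (D + 1)) ℝ)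
    (Z : Matrix (Fin (D + 1)) (Fin (n + 1)) ℝ) : Matrix (Fin (D + 1)) (Fin (n + 1)) ℝ :=
  Z + (n : ℝ)⁻¹ • (P * Z * attnMask n * (Zᵀ * Q * Z))

/-- The sparse value matrix `P₀ = [[0,0],[0,1]]`. -/
def Psparse (D : ℕ) : Matrix (Fin (D + 1)) (Fin (D + 1)) ℝ :=
  Matrix.of fun i j => if (i : ℕ) = D ∧ (j : ℕ) = D then 1 else 0

/-- `Q₀ = diag(Γ, 0)`. -/
def diagEmbed (D : ℕ) (Γ : Matrix (Fin D) (Fin D) ℝ) : Matrix (Fin (D + 1)) (Fin (D + 1)) ℝ :=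
  Matrix.of fun i j =>
    if hi : (i : ℕ) < D then
      (if hj : (j : ℕ) < D then Γ ⟨(i : ℕ), hi⟩ ⟨(j : ℕ), hj⟩ else 0)
    else 0

/-- Prompt whose `i`-th column is `(u_i, v_i)` for `i ≤ n` and last column `(u_{n+1}, 0)`. -/
def promptU (D n : ℕ) (u : Fin (n + 1) → Fin D → ℝ) (v : Fin n → ℝ) :
    Matrix (Fin (D + 1)) (Fin (n + 1)) ℝ :=
  Matrix.of fun i j =>
    if hi : (i : ℕ) < D then u j ⟨(i : ℕ), hi⟩
    else if hj : (j : ℕ) < n then v ⟨(j : ℕ), hj⟩ else 0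

/-- Extended input `(1, x)`. -/
def xext (d : ℕ) (x : Fin d → ℝ) (i : Fin (d + 1)) : ℝ :=
  if h : (i : ℕ) = 0 then 1 else x ⟨(i : ℕ) - 1, by have := i.isLt; omega⟩

/-- The random quadratic target. -/
def quadTarget (d : ℕ) (w : Fin (d + 1) × Fin (d + 1) → ℝ) (x : Fin d → ℝ) : ℝ :=
  ∑ p : Fin (d + 1) × Fin (d + 1),
    if p.1 ≤ p.2 then w p * xext d x p.1 * xext d x p.2 else 0

/-- Joint distribution of the quadratic ICL setup. -/
def quadMeasure (d n : ℕ) :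
    Measure ((Fin (n + 1) → Fin d → ℝ) × (Fin (d + 1) × Fin (d + 1) → ℝ)) :=
  (Measure.pi fun _ => stdGaussianPi d).prod (Measure.pi fun _ => gaussianReal 0 1)

/-- Position of the pair `(i,j)`, `0 ≤ i ≤ j ≤ d`, in the lexicographic enumeration. -/
def pairEnc (d i j : ℕ) : ℕ :=
  i * (d + 1) - i * (i - 1) / 2 + (j - i)

/-- Value of the quadratic feature indexed by the pair `(i,j)`. -/
def qval (d : ℕ) (x : Fin d → ℝ) (i j : Fin (d + 1)) : ℝ :=
  if h0 : (i : ℕ) = 0 then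
    (if hj : (j : ℕ) = 0 then 1 else x ⟨(j : ℕ) - 1, by have := j.isLt; omega⟩)
  else if hij : (i : ℕ) = (j : ℕ) then
    (x ⟨(i : ℕ) - 1, by have := i.isLt; omega⟩) ^ 2 - 1
  else
    x ⟨(i : ℕ) - 1, by have := i.isLt; omega⟩ *
      x ⟨(j : ℕ) - 1, by have := i.isLt; have := j.isLt; omega⟩

/-- The quadratic feature map `x̄ : ℝ^d → ℝ^{d̄}`. -/
def qfeat (d : ℕ) (x : Fin d → ℝ) (k : Fin ((d + 2) * (d + 1) / 2)) : ℝ :=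
  ∑ p : Fin (d + 1) × Fin (d + 1),
    if p.1 ≤ p.2 ∧ pairEnc d p.1 p.2 = (k : ℕ) then qval d x p.1 p.2 else 0

/-- ICL loss of the attention layer with weights `P, Q` on the prompt whose columns are
the quadratic features `(x̄(x_i), y_i)` (last column `(x̄(x_{n+1}), 0)`). -/
def featLoss (d n : ℕ)
    (P Q : Matrix (Fin ((d + 2) * (d + 1) / 2 + 1)) (Fin ((d + 2) * (d + 1) / 2 + 1)) ℝ) : ℝ :=
  ∫ ω, (attn ((d + 2) * (d + 1) / 2) n P Q
        (promptU ((d + 2) * (d + 1) / 2) n (fun t => qfeat d (ω.1 t))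
          fun i => quadTarget d ω.2 (ω.1 i.castSucc))
        (Fin.last ((d + 2) * (d + 1) / 2)) (Fin.last n)
      + quadTarget d ω.2 (ω.1 (Fin.last n))) ^ 2 ∂quadMeasure d n

theorem attn_entry (D n : ℕ) (P Q : Matrix (Fin (D + 1)) (Fin (D + 1)) ℝ)
    (u : Fin (n + 1) → Fin D → ℝ) (v : Fin n → ℝ) :
    attn D n P Q (promptU D n u v) (Fin.last D) (Fin.last n) =
      (n : ℝ)⁻¹ * ∑ i : Fin n,
        ((∑ a : Fin D, P (Fin.last D) a.castSucc * u i.castSucc a) + P (Fin.last D) (Fin.last D) * v i) *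
        ((∑ c : Fin D, (∑ b : Fin D, u i.castSucc b * Q b.castSucc c.castSucc) * u (Fin.last n) c) +
          v i * ∑ c : Fin D, Q (Fin.last D) c.castSucc * u (Fin.last n) c) := by
  have h1 : ∀ (a : Fin D) (j : Fin (n+1)), promptU D n u v a.castSucc j = u j a := by
    intro a j; simp [promptU]
  have h2 : ∀ (j : Fin n), promptU D n u v (Fin.last D) j.castSucc = v j := by
    intro j; simp [promptU]
  have h3 : promptU D n u v (Fin.last D) (Fin.last n) = 0 := by simp [promptU]
  simp only [attn, attnMask, Matrix.add_apply, Matrix.smul_apply, smul_eq_mul, h3, zero_add]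
  congr 1
  rw [Matrix.mul_apply, Fin.sum_univ_castSucc]
  simp only [Matrix.mul_diagonal, if_true, mul_zero, zero_mul, add_zero]
  refine Finset.sum_congr rfl fun i _ => ?_
  rw [if_neg (Fin.castSucc_lt_last i).ne, mul_one]
  congr 1
  · rw [Matrix.mul_apply, Fin.sum_univ_castSucc]
    simp only [h1, h2]
  · rw [Matrix.mul_apply, Fin.sum_univ_castSucc]
    simp only [h1, h3, mul_zero, add_zero, Matrix.mul_apply, Matrix.transpose_apply,
      Fin.sum_univ_castSucc, h2, add_mul, Finset.sum_add_distrib, Finset.mul_sum, mul_assoc]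

theorem sparse_eq (D n : ℕ) (P Q : Matrix (Fin (D + 1)) (Fin (D + 1)) ℝ) :
    ∃ Γ : Matrix (Fin D) (Fin D) ℝ, ∀ (u : Fin (n + 1) → Fin D → ℝ) (v : Fin n → ℝ),
      attn D n (Psparse D) (diagEmbed D Γ) (promptU D n u v) (Fin.last D) (Fin.last n) =
      (attn D n P Q (promptU D n u v) (Fin.last D) (Fin.last n) -
        attn D n P Q (promptU D n u (fun i => - v i)) (Fin.last D) (Fin.last n)) / 2 := by
  refine ⟨Matrix.of fun b c => P (Fin.last D) (Fin.last D) * Q b.castSucc c.castSucc +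
    P (Fin.last D) b.castSucc * Q (Fin.last D) c.castSucc, fun u v => ?_⟩
  simp only [attn_entry]
  rw [← mul_sub, ← Finset.sum_sub_distrib, mul_div_assoc, Finset.sum_div]
  congr 1
  refine Finset.sum_congr rfl fun i _ => ?_
  have e1 : ∀ a : Fin D, Psparse D (Fin.last D) a.castSucc = 0 := by
    intro a; simp [Psparse, a.isLt.ne]
  have e2 : Psparse D (Fin.last D) (Fin.last D) = 1 := by simp [Psparse]
  simp only [e1, e2, diagEmbed, Matrix.of_apply, Fin.val_castSucc, Fin.is_lt, dif_pos, Fin.val_last,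
    lt_irrefl, dif_neg, not_false_eq_true, zero_mul, Finset.sum_const_zero, mul_zero, add_zero,
    zero_add, one_mul, Fin.eta]
  set p := ∑ a : Fin D, P (Fin.last D) a.castSucc * u i.castSucc a with hp
  set t := ∑ c : Fin D, Q (Fin.last D) c.castSucc * u (Fin.last n) c with ht
  set S := ∑ c : Fin D, (∑ b : Fin D, u i.castSucc b * Q b.castSucc c.castSucc) * u (Fin.last n) c
    with hS
  set q := P (Fin.last D) (Fin.last D)
  have key : (∑ c : Fin D, (∑ b : Fin D, u i.castSucc b * (q * Q b.castSucc c.castSucc +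
      P (Fin.last D) b.castSucc * Q (Fin.last D) c.castSucc)) * u (Fin.last n) c) = q * S + p * t := by
    rw [hS, ht, Finset.mul_sum, Finset.mul_sum, ← Finset.sum_add_distrib]
    refine Finset.sum_congr rfl fun c _ => ?_
    rw [hp, ← mul_assoc, ← mul_assoc, ← add_mul]
    congr 1
    rw [Finset.mul_sum, Finset.sum_mul, ← Finset.sum_add_distrib]
    refine Finset.sum_congr rfl fun b _ => ?_
    ring
  rw [key]
  ring

/-- All moments finite. -/
def Good {Ω : Type*} [MeasurableSpace Ω] (μ : Measure Ω) (f : Ω → ℝ) : Prop :=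
  ∀ p : ℕ, MemLp f (p : ENNReal) μ

namespace Good
variable {Ω : Type*} [MeasurableSpace Ω] {μ : Measure Ω} {f g : Ω → ℝ}

theorem add (hf : Good μ f) (hg : Good μ g) : Good μ (fun x => f x + g x) :=
  fun p => (hf p).add (hg p)

theorem const [IsFiniteMeasure μ] (c : ℝ) : Good μ (fun _ => c) := fun _ => memLp_const c

theorem mul (hf : Good μ f) (hg : Good μ g) : Good μ (fun x => f x * g x) := by
  intro p
  have : ENNReal.HolderTriple ((2 * p : ℕ) : ENNReal) ((2 * p : ℕ) : ENNReal) (p : ENNReal) := by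
    constructor
    push_cast
    rw [ENNReal.mul_inv (by simp) (by simp), ← add_mul, ENNReal.inv_two_add_inv_two, one_mul]
  exact (hg (2 * p)).mul (hf (2 * p))

theorem sum {ι : Type*} (s : Finset ι) {f : ι → Ω → ℝ} (hf : ∀ i, Good μ (f i)) :
    Good μ (fun x => ∑ i ∈ s, f i x) := fun p => memLp_finsetSum s fun i _ => hf i p

end Good

theorem quad_instances (d : ℕ) : IsProbabilityMeasure (stdGaussianPi d) := by
  unfold stdGaussianPi; infer_instance

theorem quad_prob (d n : ℕ) : IsProbabilityMeasure (quadMeasure d n) := by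
  have := quad_instances d
  unfold quadMeasure; infer_instance

theorem good_x (d n : ℕ) (t : Fin (n + 1)) (i : Fin d) :
    Good (quadMeasure d n) (fun ω => ω.1 t i) := by
  have := quad_instances d
  intro p
  have h1 : MeasurePreserving (Function.eval i) (stdGaussianPi d) (gaussianReal 0 1) :=
    measurePreserving_eval (fun _ : Fin d => gaussianReal 0 1) i
  have h2 := measurePreserving_eval (fun _ : Fin (n + 1) => stdGaussianPi d) t
  have h3 : MeasurePreserving Prod.fst (quadMeasure d n) (Measure.pi fun _ => stdGaussianPi d) :=
    measurePreserving_fst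
  have h := h1.comp (h2.comp h3)
  exact (memLp_id_gaussianReal (μ := 0) (v := 1) (p : NNReal)).comp_measurePreserving h

theorem good_w (d n : ℕ) (i : Fin (d + 1) × Fin (d + 1)) :
    Good (quadMeasure d n) (fun ω => ω.2 i) := by
  have := quad_instances d
  intro p
  have h2 := measurePreserving_eval (fun _ : Fin (d + 1) × Fin (d + 1) => gaussianReal 0 1) i
  have h3 : MeasurePreserving Prod.snd (quadMeasure d n) (Measure.pi fun _ => gaussianReal 0 1) :=
    measurePreserving_snd
  have h := h2.comp h3
  exact (memLp_id_gaussianReal (μ := 0) (v := 1) (p : NNReal)).comp_measurePreserving h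

theorem good_xext (d n : ℕ) (t : Fin (n + 1)) (i : Fin (d + 1)) :
    Good (quadMeasure d n) (fun ω => xext d (ω.1 t) i) := by
  have := quad_prob d n
  unfold xext
  split_ifs
  · exact Good.const 1
  · exact good_x d n t _

theorem good_target (d n : ℕ) (t : Fin (n + 1)) :
    Good (quadMeasure d n) (fun ω => quadTarget d ω.2 (ω.1 t)) := by
  have := quad_prob d n
  unfold quadTarget
  refine Good.sum _ fun p => ?_
  split_ifs
  · exact ((good_w d n p).mul (good_xext d n t _)).mul (good_xext d n t _)
  · exact Good.const 0

theorem good_feat (d n : ℕ) (t : Fin (n + 1)) (k : Fin ((d + 2) * (d + 1) / 2)) :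
    Good (quadMeasure d n) (fun ω => qfeat d (ω.1 t) k) := by
  have := quad_prob d n
  unfold qfeat
  refine Good.sum _ fun p => ?_
  split_ifs
  · unfold qval
    split_ifs
    · exact Good.const 1
    · exact good_x d n t _
    · simp only [sq, sub_eq_add_neg]
      exact ((good_x d n t _).mul (good_x d n t _)).add (Good.const (-1))
    · exact (good_x d n t _).mul (good_x d n t _)
  · exact Good.const 0

theorem good_attn (d n : ℕ)
    (P Q : Matrix (Fin ((d + 2) * (d + 1) / 2 + 1)) (Fin ((d + 2) * (d + 1) / 2 + 1)) ℝ) :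
    Good (quadMeasure d n) (fun ω => attn ((d + 2) * (d + 1) / 2) n P Q
        (promptU ((d + 2) * (d + 1) / 2) n (fun t => qfeat d (ω.1 t))
          fun i => quadTarget d ω.2 (ω.1 i.castSucc))
        (Fin.last ((d + 2) * (d + 1) / 2)) (Fin.last n)
      + quadTarget d ω.2 (ω.1 (Fin.last n))) := by
  have := quad_prob d n
  simp only [attn_entry]
  refine Good.add (Good.mul (Good.const _) (Good.sum _ fun i => Good.mul (Good.add ?_ ?_)
    (Good.add ?_ ?_))) (good_target d n _)
  · exact Good.sum _ fun a => (Good.const _).mul (good_feat d n _ _)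
  · exact (Good.const _).mul (good_target d n _)
  · exact Good.sum _ fun c => (Good.sum _ fun b => (good_feat d n _ _).mul (Good.const _)).mul
      (good_feat d n _ _)
  · exact (good_target d n _).mul (Good.sum _ fun c => (Good.const _).mul (good_feat d n _ _))

theorem quadTarget_neg (d : ℕ) (w : Fin (d + 1) × Fin (d + 1) → ℝ) (x : Fin d → ℝ) :
    quadTarget d (fun p => - w p) x = - quadTarget d w x := by
  unfold quadTarget
  rw [← Finset.sum_neg_distrib]
  refine Finset.sum_congr rfl fun p _ => ?_
  split_ifs <;> ring

theorem flip_mp (d n : ℕ) : MeasurePreserving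
    (fun ω : (Fin (n + 1) → Fin d → ℝ) × (Fin (d + 1) × Fin (d + 1) → ℝ) =>
      (ω.1, fun p => - ω.2 p)) (quadMeasure d n) (quadMeasure d n) := by
  have := quad_instances d
  have h0 : MeasurePreserving (fun x : ℝ => -x) (gaussianReal 0 1) (gaussianReal 0 1) :=
    ⟨measurable_neg, by simpa using gaussianReal_map_neg (μ := 0) (v := 1)⟩
  have h1 := measurePreserving_pi (fun _ : Fin (d + 1) × Fin (d + 1) => gaussianReal 0 1)
    (fun _ => gaussianReal 0 1) (fun _ => h0)
  exact (MeasurePreserving.id _).prod h1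

/-- restricting attention weights to the sparse form
`P₀ = [[0,0],[0,1]]`, `Q₀ = [[Γ,0],[0,0]]` does not increase the minimal ICL loss:
for every `(P, Q)` there is a `Γ` doing at least as well. -/
theorem stmt13 (d n : ℕ) (hd : 1 ≤ d) (hn : 1 ≤ n)
    (P Q : Matrix (Fin ((d + 2) * (d + 1) / 2 + 1)) (Fin ((d + 2) * (d + 1) / 2 + 1)) ℝ) :
    ∃ Γ : Matrix (Fin ((d + 2) * (d + 1) / 2)) (Fin ((d + 2) * (d + 1) / 2)) ℝ,
      featLoss d n (Psparse ((d + 2) * (d + 1) / 2)) (diagEmbed ((d + 2) * (d + 1) / 2) Γ)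
        ≤ featLoss d n P Q := by
  obtain ⟨Γ, hΓ⟩ := sparse_eq ((d + 2) * (d + 1) / 2) n P Q
  refine ⟨Γ, ?_⟩
  unfold featLoss
  have hgood := good_attn d n P Q
  have hgood' := good_attn d n (Psparse _) (diagEmbed _ Γ)
  set G : ((Fin (n + 1) → Fin d → ℝ) × (Fin (d + 1) × Fin (d + 1) → ℝ)) → ℝ :=
    fun ω => attn ((d + 2) * (d + 1) / 2) n P Q
        (promptU ((d + 2) * (d + 1) / 2) n (fun t => qfeat d (ω.1 t))
          fun i => quadTarget d ω.2 (ω.1 i.castSucc))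
        (Fin.last ((d + 2) * (d + 1) / 2)) (Fin.last n)
      + quadTarget d ω.2 (ω.1 (Fin.last n)) with hG
  have hflip := flip_mp d n
  have hi : Integrable (fun ω => G ω ^ 2) (quadMeasure d n) := (hgood 2).integrable_sq
  have hi2 : Integrable (fun ω => G (ω.1, fun p => - ω.2 p) ^ 2) (quadMeasure d n) :=
    hflip.integrable_comp_of_integrable hi
  have he : ∫ ω, G (ω.1, fun p => - ω.2 p) ^ 2 ∂quadMeasure d n = ∫ ω, G ω ^ 2 ∂quadMeasure d n := by
    have h := integral_map (μ := quadMeasure d n) hflip.measurable.aemeasurable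
      (f := fun ω => G ω ^ 2) (by rw [hflip.map_eq]; exact hi.aestronglyMeasurable)
    rw [hflip.map_eq] at h
    exact h.symm
  calc _ ≤ ∫ ω, (G ω ^ 2 + G (ω.1, fun p => - ω.2 p) ^ 2) / 2 ∂quadMeasure d n := by
        refine integral_mono (hgood' 2).integrable_sq ((hi.add hi2).div_const 2) fun ω => ?_
        simp only [hΓ, hG, quadTarget_neg]
        set A := attn ((d + 2) * (d + 1) / 2) n P Q
          (promptU ((d + 2) * (d + 1) / 2) n (fun t => qfeat d (ω.1 t))
            fun i => quadTarget d ω.2 (ω.1 i.castSucc))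
          (Fin.last ((d + 2) * (d + 1) / 2)) (Fin.last n)
        set B := attn ((d + 2) * (d + 1) / 2) n P Q
          (promptU ((d + 2) * (d + 1) / 2) n (fun t => qfeat d (ω.1 t))
            fun i => - quadTarget d ω.2 (ω.1 i.castSucc))
          (Fin.last ((d + 2) * (d + 1) / 2)) (Fin.last n)
        nlinarith [sq_nonneg (A + B)]
    _ = ∫ ω, G ω ^ 2 ∂quadMeasure d n := by
        rw [integral_div, integral_add hi hi2, he]
        ring
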